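/- Let n ≥ 1, let σ ∈ Matrix (Fin n) (Fin n) ℂ be positive definite with Tr σ = 1, and let Φ : Matrix (Fin n) (Fin n) ℂ → Matrix (Fin n) (Fin n) ℂ be a linear map mapping Hermitian matrices to Hermitian matrices, with Φ(σ) = 0 and with Φ injective on the real subspace T of traceless Hermitian matrices. Define I(ρ) := −Re Tr[(log ρ − log σ)·Φ(ρ)] on the set 𝔓₊ of positive definite matrices of trace 1. Assume: (a) I(ρ) ≥ 0 for all ρ ∈ 𝔓₊ and I is convex on 𝔓₊; (b) Φ is selfadjoint with respect to the BKM-tilde inner product, i.e. ⟨Φ(A), B⟩_BKM~ = ⟨A, Φ(B)⟩_BKM~ for all Hermitian A, B, where ⟨A,B⟩_BKM~ := Re Tr[A·∫₀^∞ (t·I+σ)⁻¹ B (t·I+σ)⁻¹ dt]. Then I(ρ) > 0 for every ρ ∈ 𝔓₊ with ρ ≠ σ. -/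

import Mathlib

open scoped ComplexOrder Matrix

/-- Matrix logarithm of a positive definite (Hermitian) matrix, defined by applying the
real logarithm to the eigenvalues in a spectral decomposition. -/
noncomputable def mlog {n : ℕ} (ρ : Matrix (Fin n) (Fin n) ℂ) :
    Matrix (Fin n) (Fin n) ℂ :=
  if h : ρ.IsHermitian then
    (h.eigenvectorUnitary : Matrix (Fin n) (Fin n) ℂ) *
      Matrix.diagonal (fun i => ((Real.log (h.eigenvalues i) : ℝ) : ℂ)) *
      (h.eigenvectorUnitary : Matrix (Fin n) (Fin n) ℂ)ᴴ
  else 0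

/-- The entropy production functional `I(ρ) := −Re Tr[(log ρ − log σ) Φ(ρ)]`. -/
noncomputable def entProd {n : ℕ} (σ : Matrix (Fin n) (Fin n) ℂ)
    (Φ : Matrix (Fin n) (Fin n) ℂ →ₗ[ℂ] Matrix (Fin n) (Fin n) ℂ)
    (ρ : Matrix (Fin n) (Fin n) ℂ) : ℝ :=
  -(((mlog ρ - mlog σ) * Φ ρ).trace).re

/-- The BKM-tilde pairing
`⟨A,B⟩_BKM~ := Re Tr[A ∫₀^∞ (t·I+σ)⁻¹ B (t·I+σ)⁻¹ dt]`, written as a real improper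
integral. -/
noncomputable def bkmTilde {n : ℕ} (σ A B : Matrix (Fin n) (Fin n) ℂ) : ℝ :=
  ∫ t in Set.Ioi (0:ℝ),
    ((A * ((t : ℂ) • (1 : Matrix (Fin n) (Fin n) ℂ) + σ)⁻¹ * B * ((t : ℂ) • 1 + σ)⁻¹).trace).re


/-!
Let `B` be the BKM pairing. Since `A ↦ ∫₀^∞ (t + σ)⁻¹ A (t + σ)⁻¹ dt` is the derivative of the
logarithm at `σ` and `Φ σ = 0`, we have `I(σ + s A) / s² → -B(Φ A, A)` as `s → 0`. Nonnegativity of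
`I` thus makes `(A, C) ↦ -B(Φ A, C)` a positive semidefinite symmetric form. If `I(ρ) = 0`, then by
convexity `I` vanishes on the segment from `σ` to `ρ`, so `A = ρ - σ` is isotropic for this form; by
Cauchy–Schwarz it lies in the kernel, whence `B(Φ A, Φ A) = 0` and `Φ A = 0`.
-/

section EntropyProduction

open Filter MeasureTheory Set Topology

section RealIntegrals

variable {c x t : ℝ}

theorem integrableOn_inv_add_sq (hc : 0 < c) :
    IntegrableOn (fun t : ℝ => (t + c)⁻¹ ^ 2) (Ioi 0) := by
  refine (integrableOn_add_rpow_Ioi_of_lt (a := -2) (c := 0) (m := c) (by norm_num)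
    (by linarith)).congr_fun (fun t (ht : 0 < t) => ?_) measurableSet_Ioi
  change (t + c) ^ (-2 : ℝ) = (t + c)⁻¹ ^ 2
  rw [Real.rpow_neg (by positivity), Real.rpow_two, inv_pow]

theorem abs_inv_sub_inv_le (hc : 0 < c) (hc1 : c ≤ 1) (hcx : c ≤ x) (ht : 0 ≤ t) :
    |(t + 1)⁻¹ - (t + x)⁻¹| ≤ |x - 1| * (t + c)⁻¹ ^ 2 := by
  have hx : 0 < t + x := by linarith
  calc |(t + 1)⁻¹ - (t + x)⁻¹| = |x - 1| * ((t + 1)⁻¹ * (t + x)⁻¹) := by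
        rw [inv_sub_inv (by positivity) hx.ne', abs_div, add_sub_add_left_eq_sub,
          abs_of_pos (by positivity : 0 < (t + 1) * (t + x)), div_eq_mul_inv, mul_inv]
    _ ≤ |x - 1| * (t + c)⁻¹ ^ 2 := by rw [sq]; gcongr

theorem integral_inv_sub_inv_eq_log (hx : 0 < x) :
    ∫ t in Ioi (0 : ℝ), ((t + 1)⁻¹ - (t + x)⁻¹) = Real.log x := by
  have hlog (y : ℝ) (hy : 0 < y) (t : ℝ) (ht : 0 ≤ t) :
      HasDerivAt (fun t => Real.log (t + y)) (t + y)⁻¹ t := by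
    simpa only [one_div] using ((hasDerivAt_id' t).add_const y).log (by positivity)
  have hint : IntegrableOn (fun t : ℝ => (t + 1)⁻¹ - (t + x)⁻¹) (Ioi 0) := by
    have hc : 0 < min 1 x := lt_min one_pos hx
    refine ((integrableOn_inv_add_sq hc).const_mul |x - 1|).mono' (by fun_prop) ?_
    exact ae_restrict_of_forall_mem measurableSet_Ioi fun t ht =>
      abs_inv_sub_inv_le hc (min_le_left _ _) (min_le_right _ _) (le_of_lt ht)
  have hlim : Tendsto (fun t => Real.log (t + 1) - Real.log (t + x)) atTop (𝓝 0) := by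
    have hinv : Tendsto (fun t : ℝ => (t + x)⁻¹) atTop (𝓝 0) :=
      tendsto_inv_atTop_zero.comp (tendsto_atTop_add_const_right _ x tendsto_id)
    have hratio : Tendsto (fun t : ℝ => 1 + (1 - x) * (t + x)⁻¹) atTop (𝓝 1) := by
      simpa using (hinv.const_mul (1 - x)).const_add 1
    rw [← Real.log_one]
    refine (hratio.log one_ne_zero).congr' ?_
    filter_upwards [eventually_gt_atTop 0] with t ht
    rw [← Real.log_div (by positivity) (by positivity)]
    congr 1
    field_simp
    ring
  rw [integral_Ioi_of_hasDerivAt_of_tendsto'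
    (fun t ht => (hlog 1 one_pos t ht).sub (hlog x hx t ht)) hint hlim]
  simp

end RealIntegrals

section SelfAdjoint

variable {E : Type*} [AddCommGroup E] [StarAddMonoid E] [Module ℝ E] [StarModule ℝ E]
  [TopologicalSpace E] [ContinuousAdd E] [ContinuousSMul ℝ E]

theorem tendsto_add_smul_nhdsWithin_isSelfAdjoint {a x : E} (ha : IsSelfAdjoint a)
    (hx : IsSelfAdjoint x) :
    Tendsto (fun s : ℝ => a + s • x) (𝓝 0) (𝓝[{b | IsSelfAdjoint b}] a) := by
  refine tendsto_nhdsWithin_iff.2 ⟨?_, .of_forall fun s => ha.add ((IsSelfAdjoint.all s).smul hx)⟩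
  exact Continuous.tendsto' (by fun_prop) 0 a (by simp)

end SelfAdjoint

/-- The shifted inverse `(t + a)⁻¹`, that is, the resolvent of `-a` at `t`; like `Ring.inverse`, it
is `0` when `t + a` is not invertible. -/
noncomputable def shiftInv {A : Type*} [Ring A] [Algebra ℝ A] (a : A) (t : ℝ) : A :=
  Ring.inverse (algebraMap ℝ A t + a)

section CStarAlgebra

variable {A : Type*} [CStarAlgebra A] [PartialOrder A] [StarOrderedRing A] {a b : A} {c d t : ℝ}

theorem isStrictlyPositive_of_algebraMap_le (hc : 0 < c) (h : algebraMap ℝ A c ≤ a) :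
    IsStrictlyPositive a :=
  IsStrictlyPositive.of_le (isStrictlyPositive_algebraMap hc) h

theorem exists_pos_algebraMap_le (ha : IsStrictlyPositive a) :
    ∃ c > 0, algebraMap ℝ A c ≤ a := by
  rcases subsingleton_or_nontrivial A with _ | _
  · exact ⟨1, one_pos, (Subsingleton.elim _ _).le⟩
  · exact (CFC.exists_pos_algebraMap_le_iff ha.isSelfAdjoint).2 fun _ hx => ha.spectrum_pos hx

theorem eventually_algebraMap_le (ha : IsSelfAdjoint a) (h : algebraMap ℝ A c ≤ a) (hdc : d < c) :
    ∀ᶠ b in 𝓝[{b | IsSelfAdjoint b}] a, algebraMap ℝ A d ≤ b := by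
  filter_upwards [self_mem_nhdsWithin,
    nhdsWithin_le_nhds (Metric.ball_mem_nhds a (sub_pos.2 hdc))] with b hb hball
  have hnorm : ‖b - a‖ ≤ c - d := (mem_ball_iff_norm.1 hball).le
  calc algebraMap ℝ A d = -algebraMap ℝ A (c - d) + algebraMap ℝ A c := by
        rw [map_sub]; abel
    _ ≤ -algebraMap ℝ A ‖b - a‖ + a := by gcongr
    _ ≤ (b - a) + a := by
        gcongr
        exact (hb.sub ha).neg_algebraMap_norm_le_self
    _ = b := sub_add_cancel b a

theorem isUnit_algebraMap_add (ha : IsStrictlyPositive a) (ht : 0 ≤ t) :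
    IsUnit (algebraMap ℝ A t + a) := by
  refine (IsStrictlyPositive.of_le ha (le_add_of_nonneg_left ?_)).isUnit
  exact algebraMap_nonneg A ht

theorem shiftInv_eq_cfc (ha : IsStrictlyPositive a) (ht : 0 ≤ t) :
    shiftInv a t = cfc (fun x : ℝ => (t + x)⁻¹) a := by
  have hsa := ha.isSelfAdjoint
  rw [cfc_inv (fun x : ℝ => t + x) a fun x hx => (by have := ha.spectrum_pos hx; positivity),
    cfc_const_add t (fun x => x) a, cfc_id' ℝ a, shiftInv]

theorem shiftInv_one (ht : 0 ≤ t) : shiftInv (1 : A) t = algebraMap ℝ A (t + 1)⁻¹ :=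
  (shiftInv_eq_cfc isStrictlyPositive_one ht).trans cfc_apply_one

theorem shiftInv_one_sub_shiftInv (ha : IsStrictlyPositive a) (ht : 0 ≤ t) :
    shiftInv 1 t - shiftInv a t = cfc (fun x : ℝ => (t + 1)⁻¹ - (t + x)⁻¹) a := by
  have hsa := ha.isSelfAdjoint
  have hinv : ContinuousOn (fun x : ℝ => (t + x)⁻¹) (spectrum ℝ a) :=
    .inv₀ (by fun_prop) fun x hx => (add_pos_of_nonneg_of_pos ht (ha.spectrum_pos hx)).ne'
  rw [cfc_sub (fun _ => (t + 1)⁻¹) _ a continuousOn_const hinv, cfc_const _ a,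
    shiftInv_eq_cfc ha ht, shiftInv_one ht]

theorem norm_shiftInv_le (hc : 0 < c) (h : algebraMap ℝ A c ≤ a) (ht : 0 ≤ t) :
    ‖shiftInv a t‖ ≤ (t + c)⁻¹ := by
  have ha := isStrictlyPositive_of_algebraMap_le hc h
  rw [shiftInv_eq_cfc ha ht]
  refine norm_cfc_le (by positivity) fun x hx => ?_
  have hcx : c ≤ x := (algebraMap_le_iff_le_spectrum ha.isSelfAdjoint).1 h x hx
  rw [Real.norm_of_nonneg (inv_nonneg.2 (by linarith))]
  gcongr

theorem shiftInv_sub_shiftInv (ha : IsStrictlyPositive a) (hb : IsStrictlyPositive b)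
    (ht : 0 ≤ t) : shiftInv a t - shiftInv b t = shiftInv a t * (b - a) * shiftInv b t := by
  rw [shiftInv, shiftInv, Ring.inverse_sub_inverse
    (iff_of_true (isUnit_algebraMap_add ha ht) (isUnit_algebraMap_add hb ht)),
    add_sub_add_left_eq_sub]

theorem continuousAt_ringInverse_algebraMap_add (ha : IsStrictlyPositive a) (ht : 0 ≤ t) :
    ContinuousAt Ring.inverse (algebraMap ℝ A t + a) := by
  obtain ⟨u, hu⟩ := isUnit_algebraMap_add ha ht
  exact hu ▸ NormedRing.inverse_continuousAt u

theorem continuousOn_shiftInv (ha : IsStrictlyPositive a) :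
    ContinuousOn (shiftInv a) (Ici 0) := fun _ ht =>
  ((continuousAt_ringInverse_algebraMap_add ha ht).comp
    (f := fun t => algebraMap ℝ A t + a) (by fun_prop)).continuousWithinAt

theorem continuousAt_shiftInv_left (ha : IsStrictlyPositive a) (ht : 0 ≤ t) :
    ContinuousAt (fun b : A => shiftInv b t) a :=
  (continuousAt_ringInverse_algebraMap_add ha ht).comp
    (f := fun b => algebraMap ℝ A t + b) (by fun_prop)

theorem aestronglyMeasurable_shiftInv_mul_mul (ha : IsStrictlyPositive a)
    (hb : IsStrictlyPositive b) (x : A) :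
    AEStronglyMeasurable (fun t => shiftInv a t * x * shiftInv b t) (volume.restrict (Ioi 0)) :=
  ((((continuousOn_shiftInv ha).mul continuousOn_const).mul (continuousOn_shiftInv hb)).mono
    Ioi_subset_Ici_self).aestronglyMeasurable measurableSet_Ioi

theorem norm_shiftInv_mul_mul_le (hc : 0 < c) (ha : algebraMap ℝ A c ≤ a)
    (hb : algebraMap ℝ A c ≤ b) (x : A) (ht : 0 ≤ t) :
    ‖shiftInv a t * x * shiftInv b t‖ ≤ ‖x‖ * (t + c)⁻¹ ^ 2 :=
  calc ‖shiftInv a t * x * shiftInv b t‖ ≤ ‖shiftInv a t‖ * ‖x‖ * ‖shiftInv b t‖ := norm_mul₃_le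
    _ ≤ (t + c)⁻¹ * ‖x‖ * (t + c)⁻¹ := by
        gcongr
        exacts [norm_shiftInv_le hc ha ht, norm_shiftInv_le hc hb ht]
    _ = ‖x‖ * (t + c)⁻¹ ^ 2 := by ring

theorem integrableOn_shiftInv_mul_mul (ha : IsStrictlyPositive a) (hb : IsStrictlyPositive b)
    (x : A) : IntegrableOn (fun t => shiftInv a t * x * shiftInv b t) (Ioi 0) := by
  obtain ⟨c, hc, hca⟩ := exists_pos_algebraMap_le ha
  obtain ⟨d, hd, hdb⟩ := exists_pos_algebraMap_le hb
  have hmin : 0 < min c d := lt_min hc hd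
  refine ((integrableOn_inv_add_sq hmin).const_mul ‖x‖).mono'
    (aestronglyMeasurable_shiftInv_mul_mul ha hb x) <|
    ae_restrict_of_forall_mem measurableSet_Ioi fun t ht =>
      norm_shiftInv_mul_mul_le hmin (le_trans ?_ hca) (le_trans ?_ hdb) x (le_of_lt ht)
  exacts [algebraMap_mono A (min_le_left c d), algebraMap_mono A (min_le_right c d)]

theorem log_eq_integral_shiftInv (ha : IsStrictlyPositive a) :
    CFC.log a = ∫ t in Ioi (0 : ℝ), (shiftInv 1 t - shiftInv a t) := by
  obtain ⟨c₀, hc₀, hca⟩ := exists_pos_algebraMap_le ha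
  obtain ⟨K, hK⟩ := (ContinuousFunctionalCalculus.isCompact_spectrum (R := ℝ) a
    ).exists_bound_of_continuousOn (f := fun x => x - 1) (by fun_prop)
  have hle : ∀ x ∈ spectrum ℝ a, c₀ ≤ x := (algebraMap_le_iff_le_spectrum ha.isSelfAdjoint).1 hca
  set c := min 1 c₀
  have hc : 0 < c := lt_min one_pos hc₀
  have hcont : ContinuousOn (Function.uncurry fun t x : ℝ => (t + 1)⁻¹ - (t + x)⁻¹)
      (Ioi 0 ×ˢ spectrum ℝ a) := by
    refine .sub (.inv₀ (by fun_prop) ?_) (.inv₀ (by fun_prop) ?_)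
    · exact fun p hp => (add_pos hp.1 one_pos).ne'
    · exact fun p hp => (add_pos hp.1 (ha.spectrum_pos hp.2)).ne'
  calc CFC.log a = cfc (fun x => ∫ t in Ioi (0 : ℝ), ((t + 1)⁻¹ - (t + x)⁻¹)) a :=
        cfc_congr fun x hx => (integral_inv_sub_inv_eq_log (ha.spectrum_pos hx)).symm
    _ = ∫ t in Ioi (0 : ℝ), cfc (fun x => (t + 1)⁻¹ - (t + x)⁻¹) a := by
        refine cfc_setIntegral measurableSet_Ioi _ (fun t => K * (t + c)⁻¹ ^ 2) a hcont ?_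
          ((integrableOn_inv_add_sq hc).const_mul K).hasFiniteIntegral ha.isSelfAdjoint
        refine ae_restrict_of_forall_mem measurableSet_Ioi fun t ht x hx => ?_
        have hcx : c ≤ x := (min_le_right _ _).trans (hle x hx)
        refine (abs_inv_sub_inv_le hc (min_le_left _ _) hcx (le_of_lt ht)).trans ?_
        gcongr
        exact hK x hx
    _ = ∫ t in Ioi (0 : ℝ), (shiftInv 1 t - shiftInv a t) :=
        setIntegral_congr_fun measurableSet_Ioi fun t ht =>
          (shiftInv_one_sub_shiftInv ha (le_of_lt ht)).symm

theorem log_sub_log (ha : IsStrictlyPositive a) (hb : IsStrictlyPositive b) :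
    CFC.log b - CFC.log a =
      ∫ t in Ioi (0 : ℝ), shiftInv a t * (b - a) * shiftInv b t := by
  have hint : ∀ {x : A}, IsStrictlyPositive x →
      IntegrableOn (fun t => shiftInv 1 t - shiftInv x t) (Ioi 0) := fun hx =>
    (integrableOn_shiftInv_mul_mul isStrictlyPositive_one hx _).congr_fun
      (fun _ ht => (shiftInv_sub_shiftInv isStrictlyPositive_one hx (le_of_lt ht)).symm)
      measurableSet_Ioi
  rw [log_eq_integral_shiftInv ha, log_eq_integral_shiftInv hb, ← integral_sub (hint hb) (hint ha)]
  refine setIntegral_congr_fun measurableSet_Ioi fun t ht => ?_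
  rw [← shiftInv_sub_shiftInv ha hb (le_of_lt ht), sub_sub_sub_cancel_left]

/-- The Bogoliubov–Kubo–Mori kernel `x ↦ ∫₀^∞ (t + a)⁻¹ x (t + a)⁻¹ dt`, which is the derivative of
the logarithm at `a`. -/
noncomputable def logDerivMap (ha : IsStrictlyPositive a) : A →ₗ[ℝ] A where
  toFun x := ∫ t in Ioi (0 : ℝ), shiftInv a t * x * shiftInv a t
  map_add' x y := by
    simp only [mul_add, add_mul]
    exact integral_add (integrableOn_shiftInv_mul_mul ha ha x)
      (integrableOn_shiftInv_mul_mul ha ha y)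
  map_smul' r x := by
    simp only [mul_smul_comm, smul_mul_assoc, integral_smul, RingHom.id_apply]

theorem tendsto_integral_shiftInv_mul_mul (ha : IsStrictlyPositive a) (x : A) :
    Tendsto (fun b => ∫ t in Ioi (0 : ℝ), shiftInv a t * x * shiftInv b t)
      (𝓝[{b | IsSelfAdjoint b}] a) (𝓝 (logDerivMap ha x)) := by
  obtain ⟨c, hc, hca⟩ := exists_pos_algebraMap_le ha
  have hc2 : 0 < c / 2 := half_pos hc
  have hle : ∀ᶠ b in 𝓝[{b | IsSelfAdjoint b}] a, algebraMap ℝ A (c / 2) ≤ b :=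
    eventually_algebraMap_le ha.isSelfAdjoint hca (half_lt_self hc)
  have hle_a : algebraMap ℝ A (c / 2) ≤ a :=
    (algebraMap_mono A (half_le_self hc.le)).trans hca
  refine tendsto_integral_filter_of_dominated_convergence (fun t => ‖x‖ * (t + c / 2)⁻¹ ^ 2)
    ?_ ?_ ((integrableOn_inv_add_sq hc2).const_mul ‖x‖) ?_
  · filter_upwards [hle] with b hb
    exact aestronglyMeasurable_shiftInv_mul_mul ha (isStrictlyPositive_of_algebraMap_le hc2 hb) x
  · filter_upwards [hle] with b hb
    exact ae_restrict_of_forall_mem measurableSet_Ioi fun t ht =>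
      norm_shiftInv_mul_mul_le hc2 hle_a hb x (le_of_lt ht)
  · exact ae_restrict_of_forall_mem measurableSet_Ioi fun t ht =>
      ((continuousAt_shiftInv_left ha (le_of_lt ht)).tendsto.const_mul _).mono_left
        nhdsWithin_le_nhds

theorem eventually_isStrictlyPositive_add_smul {x : A} (ha : IsStrictlyPositive a)
    (hx : IsSelfAdjoint x) : ∀ᶠ s : ℝ in 𝓝 0, IsStrictlyPositive (a + s • x) := by
  obtain ⟨c, hc, hca⟩ := exists_pos_algebraMap_le ha
  filter_upwards [(tendsto_add_smul_nhdsWithin_isSelfAdjoint ha.isSelfAdjoint hx).eventually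
    (eventually_algebraMap_le ha.isSelfAdjoint hca (half_lt_self hc))] with s hs
  exact isStrictlyPositive_of_algebraMap_le (half_pos hc) hs

theorem hasDerivAt_log_add_smul {x : A} (ha : IsStrictlyPositive a) (hx : IsSelfAdjoint x) :
    HasDerivAt (fun s : ℝ => CFC.log (a + s • x)) (logDerivMap ha x) 0 := by
  rw [hasDerivAt_iff_tendsto_slope_zero]
  refine (((tendsto_integral_shiftInv_mul_mul ha x).comp
    (tendsto_add_smul_nhdsWithin_isSelfAdjoint ha.isSelfAdjoint hx)).mono_left
      nhdsWithin_le_nhds).congr' ?_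
  filter_upwards [self_mem_nhdsWithin,
    nhdsWithin_le_nhds (eventually_isStrictlyPositive_add_smul ha hx)] with s (hs : s ≠ 0) hpos
  simp only [Function.comp_apply, zero_add, zero_smul, add_zero, log_sub_log ha hpos,
    add_sub_cancel_left, mul_smul_comm, smul_mul_assoc, integral_smul, inv_smul_smul₀ hs]

end CStarAlgebra

section BilinForm

variable {R M : Type*} [CommRing R] [LinearOrder R] [IsStrictOrderedRing R] [AddCommGroup M]
  [Module R M]

theorem map_eq_zero_of_apply_map_self_eq_zero {B : LinearMap.BilinForm R M}
    (hB : ∀ x, B x x = 0 → x = 0) {T : M →ₗ[R] M} (hsymm : ∀ x y, B (T x) y = B (T y) x)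
    (hnonpos : ∀ x, B (T x) x ≤ 0) {x : M} (hx : B (T x) x = 0) : T x = 0 := by
  let C : LinearMap.BilinForm R M := -(B ∘ₗ T)
  have hC : LinearMap.IsSymm C := ⟨fun x y => congrArg Neg.neg (hsymm x y)⟩
  have hker : C x = 0 := (LinearMap.BilinForm.apply_apply_same_eq_zero_iff C
    (fun y => neg_nonneg.2 (hnonpos y)) hC).1 (neg_eq_zero.2 hx)
  exact hB _ (neg_eq_zero.1 (LinearMap.congr_fun hker (T x)))

end BilinForm

section Trace

variable {m 𝕜 : Type*} [Fintype m] [RCLike 𝕜]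

theorem trace_conjTranspose_mul_mul_mul_pos {P Q X : Matrix m m 𝕜} (hP : P.PosDef)
    (hQ : Q.PosDef) (hX : X ≠ 0) : 0 < (Xᴴ * P * X * Q).trace := by
  classical
  open scoped MatrixOrder in
  obtain ⟨E, hE, rfl⟩ := CStarAlgebra.isStrictlyPositive_iff_eq_star_mul_self.1
    hP.isStrictlyPositive
  obtain ⟨F, hF, rfl⟩ := CStarAlgebra.isStrictlyPositive_iff_eq_star_mul_self.1
    hQ.isStrictlyPositive
  have hne : E * X * Fᴴ ≠ 0 := by
    rwa [Ne, (show IsUnit Fᴴ from hF.star).mul_left_eq_zero, hE.mul_right_eq_zero]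
  have htrace : (Xᴴ * (star E * E) * X * (star F * F)).trace =
      ((E * X * Fᴴ)ᴴ * (E * X * Fᴴ)).trace := by
    simp only [Matrix.star_eq_conjTranspose, Matrix.conjTranspose_mul,
      Matrix.conjTranspose_conjTranspose, ← mul_assoc]
    rw [Matrix.trace_mul_comm]
    simp only [mul_assoc]
  rw [htrace]
  exact (Matrix.posSemidef_conjTranspose_mul_self _).trace_nonneg.lt_of_ne'
    (Matrix.trace_conjTranspose_mul_self_eq_zero_iff.not.2 hne)

end Trace

section Matrix

open scoped Matrix.Norms.L2Operator MatrixOrder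

variable {n : ℕ} {σ ρ X : Matrix (Fin n) (Fin n) ℂ}
  {Φ : Matrix (Fin n) (Fin n) ℂ →ₗ[ℂ] Matrix (Fin n) (Fin n) ℂ}

theorem mlog_eq_log (hρ : ρ.IsHermitian) : mlog ρ = CFC.log ρ := by
  rw [CFC.log, hρ.cfc_eq, Matrix.IsHermitian.cfc, Unitary.conjStarAlgAut_apply, mlog, dif_pos hρ]
  rfl

theorem shiftInv_eq_inv (σ : Matrix (Fin n) (Fin n) ℂ) (t : ℝ) :
    shiftInv σ t = ((t : ℂ) • 1 + σ)⁻¹ := by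
  rw [shiftInv, Matrix.nonsing_inv_eq_ringInverse, Algebra.algebraMap_eq_smul_one]
  rfl

theorem posDef_shiftInv (hσ : σ.PosDef) {t : ℝ} (ht : 0 ≤ t) : (shiftInv σ t).PosDef := by
  rw [shiftInv, ← Matrix.nonsing_inv_eq_ringInverse]
  exact (Matrix.PosDef.posSemidef_add (Matrix.nonneg_iff_posSemidef.1 (algebraMap_nonneg _ ht))
    hσ).inv

/-- The real trace pairing `(A, B) ↦ Re Tr[A B]`. -/
noncomputable def reTraceForm (n : ℕ) : LinearMap.BilinForm ℝ (Matrix (Fin n) (Fin n) ℂ) :=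
  (LinearMap.mul ℝ _).compr₂
    (Complex.reLm ∘ₗ (Matrix.traceLinearMap (Fin n) ℂ ℂ).restrictScalars ℝ)

theorem reTraceForm_apply (A B : Matrix (Fin n) (Fin n) ℂ) :
    reTraceForm n A B = (A * B).trace.re := rfl

theorem integrableOn_reTraceForm_shiftInv (hσ : σ.PosDef) (A B : Matrix (Fin n) (Fin n) ℂ) :
    IntegrableOn (fun t => reTraceForm n A (shiftInv σ t * B * shiftInv σ t)) (Ioi 0) :=
  (reTraceForm n A).toContinuousLinearMap.integrable_comp
    (integrableOn_shiftInv_mul_mul hσ.isStrictlyPositive hσ.isStrictlyPositive B)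

theorem bkmTilde_eq_integral_reTraceForm (σ A B : Matrix (Fin n) (Fin n) ℂ) :
    bkmTilde σ A B = ∫ t in Ioi (0 : ℝ), reTraceForm n A (shiftInv σ t * B * shiftInv σ t) := by
  simp only [bkmTilde, reTraceForm_apply, shiftInv_eq_inv, mul_assoc]

/-- The BKM pairing `bkmTilde σ` as a real bilinear form. -/
noncomputable def bkmForm (hσ : σ.PosDef) : LinearMap.BilinForm ℝ (Matrix (Fin n) (Fin n) ℂ) :=
  (reTraceForm n).compl₂ (logDerivMap hσ.isStrictlyPositive)

theorem bkmForm_apply (hσ : σ.PosDef) (A B : Matrix (Fin n) (Fin n) ℂ) :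
    bkmForm hσ A B = bkmTilde σ A B := by
  rw [bkmTilde_eq_integral_reTraceForm]
  exact ((reTraceForm n A).toContinuousLinearMap.integral_comp_comm
    (integrableOn_shiftInv_mul_mul hσ.isStrictlyPositive hσ.isStrictlyPositive B)).symm

theorem bkmTilde_comm (σ A B : Matrix (Fin n) (Fin n) ℂ) : bkmTilde σ A B = bkmTilde σ B A := by
  simp only [bkmTilde]
  congr! 3 with t
  rw [mul_assoc, Matrix.trace_mul_comm]
  simp only [mul_assoc]

theorem bkmTilde_self_pos (hσ : σ.PosDef) (hX : X.IsHermitian) (hX0 : X ≠ 0) :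
    0 < bkmTilde σ X X := by
  have hpos (t : ℝ) (ht : t ∈ Ioi (0 : ℝ)) :
      0 < reTraceForm n X (shiftInv σ t * X * shiftInv σ t) := by
    have hR := posDef_shiftInv hσ (le_of_lt ht)
    have htrace := trace_conjTranspose_mul_mul_mul_pos hR hR hX0
    rw [hX.eq] at htrace
    simpa only [reTraceForm_apply, mul_assoc] using (Complex.pos_iff.1 htrace).1
  rw [bkmTilde_eq_integral_reTraceForm, setIntegral_pos_iff_support_of_nonneg_ae
    (ae_restrict_of_forall_mem measurableSet_Ioi fun t ht => (hpos t ht).le)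
    (integrableOn_reTraceForm_shiftInv hσ X X),
    inter_eq_right.2 fun t ht => Function.mem_support.2 (hpos t ht).ne']
  simp

theorem hasDerivAt_reTraceForm_mlog_add_smul (hσ : σ.PosDef) (hX : X.IsHermitian)
    (C : Matrix (Fin n) (Fin n) ℂ) :
    HasDerivAt (fun s : ℝ => reTraceForm n C (mlog (σ + s • X))) (bkmTilde σ C X) 0 := by
  have hlog (s : ℝ) : mlog (σ + s • X) = CFC.log (σ + s • X) :=
    mlog_eq_log (hσ.isHermitian.add (hX.smul (IsSelfAdjoint.all s)))
  simp only [hlog, ← bkmForm_apply hσ]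
  exact (reTraceForm n C).toContinuousLinearMap.hasFDerivAt.comp_hasDerivAt 0
    (hasDerivAt_log_add_smul hσ.isStrictlyPositive hX)

theorem tendsto_entProd_add_smul_div_sq (hσ : σ.PosDef) (hΦσ : Φ σ = 0) (hX : X.IsHermitian) :
    Tendsto (fun s : ℝ => entProd σ Φ (σ + s • X) / s ^ 2) (𝓝[≠] 0) (𝓝 (-bkmTilde σ (Φ X) X)) := by
  refine (hasDerivAt_reTraceForm_mlog_add_smul hσ hX (Φ X)).tendsto_slope_zero.neg.congr' ?_
  filter_upwards [self_mem_nhdsWithin] with s (hs : s ≠ 0)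
  have hΦ : Φ (σ + s • X) = s • Φ X := by
    rw [map_add, hΦσ, zero_add, LinearMap.map_smul_of_tower]
  have hent : entProd σ Φ (σ + s • X) = -(s * reTraceForm n (Φ X) (mlog (σ + s • X) - mlog σ)) := by
    rw [entProd, hΦ, Matrix.trace_mul_comm, ← reTraceForm_apply, map_smul, LinearMap.smul_apply,
      smul_eq_mul]
  rw [hent, map_sub]
  simp only [zero_add, zero_smul, add_zero, smul_eq_mul]
  field_simp

theorem eventually_posDef_add_smul (hσ : σ.PosDef) (hX : X.IsHermitian) :
    ∀ᶠ s : ℝ in 𝓝 0, (σ + s • X).PosDef :=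
  (eventually_isStrictlyPositive_add_smul hσ.isStrictlyPositive hX).mono fun _ h =>
    Matrix.isStrictlyPositive_iff_posDef.1 h

theorem bkmTilde_map_self_nonpos_of_eventually (hσ : σ.PosDef) (hΦσ : Φ σ = 0)
    (hX : X.IsHermitian) (h : ∀ᶠ s : ℝ in 𝓝 0, 0 ≤ entProd σ Φ (σ + s • X)) :
    bkmTilde σ (Φ X) X ≤ 0 :=
  neg_nonneg.1 <| ge_of_tendsto (tendsto_entProd_add_smul_div_sq hσ hΦσ hX) <|
    (h.filter_mono nhdsWithin_le_nhds).mono fun s hs => div_nonneg hs (sq_nonneg s)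

theorem bkmTilde_map_self_eq_zero_of_eventually (hσ : σ.PosDef) (hΦσ : Φ σ = 0)
    (hX : X.IsHermitian) (h : ∀ᶠ s : ℝ in 𝓝[>] 0, entProd σ Φ (σ + s • X) = 0) :
    bkmTilde σ (Φ X) X = 0 := by
  refine neg_eq_zero.1 <| tendsto_nhds_unique
    ((tendsto_entProd_add_smul_div_sq hσ hΦσ hX).mono_left (nhdsGT_le_nhdsNE 0)) <|
    tendsto_const_nhds.congr' <| h.mono fun s hs => ?_
  simp only [hs, zero_div]

/-- The set `𝔓₊` of faithful states: positive definite matrices of trace one. -/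
def faithfulStates (n : ℕ) : Set (Matrix (Fin n) (Fin n) ℂ) :=
  {ρ | ρ.PosDef ∧ ρ.trace = 1}

theorem convex_faithfulStates (n : ℕ) : Convex ℝ (faithfulStates n) := by
  refine convex_iff_forall_pos.2 fun ρ hρ τ hτ a b ha hb hab =>
    ⟨(hρ.1.smul ha).add (hτ.1.smul hb), ?_⟩
  rw [Matrix.trace_add, Matrix.trace_smul, Matrix.trace_smul, hρ.2, hτ.2, ← add_smul, hab, one_smul]

theorem entProd_self (σ : Matrix (Fin n) (Fin n) ℂ)
    (Φ : Matrix (Fin n) (Fin n) ℂ →ₗ[ℂ] Matrix (Fin n) (Fin n) ℂ) : entProd σ Φ σ = 0 := by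
  simp [entProd]

theorem bkmTilde_map_self_nonpos_of_trace_eq_zero (hσ : σ ∈ faithfulStates n) (hΦσ : Φ σ = 0)
    (hnonneg : ∀ ρ ∈ faithfulStates n, 0 ≤ entProd σ Φ ρ) (hX : X.IsHermitian)
    (hXtr : X.trace = 0) : bkmTilde σ (Φ X) X ≤ 0 := by
  refine bkmTilde_map_self_nonpos_of_eventually hσ.1 hΦσ hX ?_
  filter_upwards [eventually_posDef_add_smul hσ.1 hX] with s hs
  refine hnonneg _ ⟨hs, ?_⟩
  rw [Matrix.trace_add, Matrix.trace_smul, hσ.2, hXtr, smul_zero, add_zero]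

theorem bkmTilde_map_self_nonpos (hσ : σ ∈ faithfulStates n) (hΦσ : Φ σ = 0)
    (hnonneg : ∀ ρ ∈ faithfulStates n, 0 ≤ entProd σ Φ ρ)
    (hsa : ∀ A B : Matrix (Fin n) (Fin n) ℂ, A.IsHermitian → B.IsHermitian →
      bkmTilde σ (Φ A) B = bkmTilde σ A (Φ B)) (hX : X.IsHermitian) :
    bkmTilde σ (Φ X) X ≤ 0 := by
  set c : ℝ := X.trace.re
  have hXtr : X.trace = c := (Complex.conj_eq_iff_re.1 <|
    (Matrix.trace_conjTranspose X).symm.trans (congrArg Matrix.trace hX.eq)).symm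
  set Y := X - c • σ
  have hY : Y.IsHermitian := hX.sub (hσ.1.isHermitian.smul (IsSelfAdjoint.all c))
  have hYtr : Y.trace = 0 := by
    rw [Matrix.trace_sub, Matrix.trace_smul, hσ.2, hXtr, Complex.real_smul, mul_one, sub_self]
  have hΦY : Φ Y = Φ X := by
    rw [map_sub, LinearMap.map_smul_of_tower, hΦσ, smul_zero, sub_zero]
  have horth : bkmTilde σ (Φ X) σ = 0 := by
    rw [hsa X σ hX hσ.1.isHermitian, hΦσ, ← bkmForm_apply hσ.1, map_zero]
  calc bkmTilde σ (Φ X) X = bkmTilde σ (Φ Y) Y := by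
        rw [hΦY, ← bkmForm_apply hσ.1, ← bkmForm_apply hσ.1, map_sub, map_smul,
          bkmForm_apply hσ.1 _ σ, horth, smul_zero, sub_zero]
    _ ≤ 0 := bkmTilde_map_self_nonpos_of_trace_eq_zero hσ hΦσ hnonneg hY hYtr

theorem map_eq_zero_of_bkmTilde_map_self_eq_zero (hσ : σ ∈ faithfulStates n)
    (hΦ : ∀ A : Matrix (Fin n) (Fin n) ℂ, A.IsHermitian → (Φ A).IsHermitian) (hΦσ : Φ σ = 0)
    (hnonneg : ∀ ρ ∈ faithfulStates n, 0 ≤ entProd σ Φ ρ)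
    (hsa : ∀ A B : Matrix (Fin n) (Fin n) ℂ, A.IsHermitian → B.IsHermitian →
      bkmTilde σ (Φ A) B = bkmTilde σ A (Φ B))
    (hX : X.IsHermitian) (hX0 : bkmTilde σ (Φ X) X = 0) : Φ X = 0 := by
  let H := selfAdjoint.submodule ℝ (Matrix (Fin n) (Fin n) ℂ)
  let B : LinearMap.BilinForm ℝ H := (bkmForm hσ.1).restrict H
  let T : H →ₗ[ℝ] H := (Φ.restrictScalars ℝ).restrict hΦ
  have hB (A C : H) : B A C = bkmTilde σ A C := bkmForm_apply hσ.1 A C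
  have hanis (A : H) (hA : B A A = 0) : A = 0 := by
    by_contra hne
    exact (bkmTilde_self_pos hσ.1 A.2 (Subtype.coe_ne_coe.2 hne)).ne' ((hB A A).symm.trans hA)
  have hsymm (A C : H) : B (T A) C = B (T C) A := by
    rw [hB, hB]
    exact (hsa A C A.2 C.2).trans (bkmTilde_comm σ A (Φ C))
  have hnonpos (A : H) : B (T A) A ≤ 0 :=
    (hB (T A) A).trans_le (bkmTilde_map_self_nonpos hσ hΦσ hnonneg hsa A.2)
  have hTX : T ⟨X, hX⟩ = 0 := map_eq_zero_of_apply_map_self_eq_zero hanis hsymm hnonpos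
    ((hB (T ⟨X, hX⟩) ⟨X, hX⟩).trans hX0)
  exact congrArg Subtype.val hTX

theorem bkmTilde_map_sub_eq_zero (hσ : σ ∈ faithfulStates n) (hΦσ : Φ σ = 0)
    (hnonneg : ∀ ρ ∈ faithfulStates n, 0 ≤ entProd σ Φ ρ)
    (hconvex : ConvexOn ℝ (faithfulStates n) (entProd σ Φ)) (hρ : ρ ∈ faithfulStates n)
    (hρ0 : entProd σ Φ ρ = 0) : bkmTilde σ (Φ (ρ - σ)) (ρ - σ) = 0 := by
  refine bkmTilde_map_self_eq_zero_of_eventually hσ.1 hΦσ (hρ.1.isHermitian.sub hσ.1.isHermitian) ?_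
  filter_upwards [Ioo_mem_nhdsGT one_pos] with s hs
  have hseg : σ + s • (ρ - σ) ∈ segment ℝ σ ρ :=
    segment_eq_image' ℝ σ ρ ▸ mem_image_of_mem _ (Ioo_subset_Icc_self hs)
  refine le_antisymm ?_ (hnonneg _ (hconvex.1.segment_subset hσ hρ hseg))
  simpa only [entProd_self, hρ0, max_self] using hconvex.le_on_segment hσ hρ hseg

end Matrix

end EntropyProduction

/-- **Strict positivity of the entropy production under BKM detailed balance.**
Let `σ` be a positive definite state of trace one and `Φ` a linear map preserving
Hermitian matrices, with `Φ σ = 0` and `Φ` injective on the real subspace of traceless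
Hermitian matrices. Assume the entropy production `I` is nonnegative and convex on the
set `𝔓₊` of positive definite states of trace one, and that `Φ` is selfadjoint with
respect to the BKM-tilde inner product. Then `I(ρ) > 0` for every `ρ ∈ 𝔓₊` with
`ρ ≠ σ`. -/
theorem entropy_production_strictly_positive
    (n : ℕ) (hn : 1 ≤ n)
    (σ : Matrix (Fin n) (Fin n) ℂ) (hσ : σ.PosDef) (hσtr : σ.trace = 1)
    (Φ : Matrix (Fin n) (Fin n) ℂ →ₗ[ℂ] Matrix (Fin n) (Fin n) ℂ)
    (hΦherm : ∀ A : Matrix (Fin n) (Fin n) ℂ, A.IsHermitian → (Φ A).IsHermitian)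
    (hΦσ : Φ σ = 0)
    (hΦinj : ∀ A : Matrix (Fin n) (Fin n) ℂ,
      A.IsHermitian → A.trace = 0 → Φ A = 0 → A = 0)
    (hnonneg : ∀ ρ : Matrix (Fin n) (Fin n) ℂ, ρ.PosDef → ρ.trace = 1 →
      0 ≤ entProd σ Φ ρ)
    (hconvex : ∀ ρ₁ ρ₂ : Matrix (Fin n) (Fin n) ℂ, ρ₁.PosDef → ρ₁.trace = 1 →
      ρ₂.PosDef → ρ₂.trace = 1 → ∀ t : ℝ, 0 ≤ t → t ≤ 1 →
      entProd σ Φ (t • ρ₁ + (1 - t) • ρ₂) ≤ t * entProd σ Φ ρ₁ + (1 - t) * entProd σ Φ ρ₂)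
    (hsa : ∀ A B : Matrix (Fin n) (Fin n) ℂ, A.IsHermitian → B.IsHermitian →
      bkmTilde σ (Φ A) B = bkmTilde σ A (Φ B)) :
    ∀ ρ : Matrix (Fin n) (Fin n) ℂ, ρ.PosDef → ρ.trace = 1 → ρ ≠ σ →
      0 < entProd σ Φ ρ := by
  intro ρ hρ hρtr hne
  have hσ' : σ ∈ faithfulStates n := ⟨hσ, hσtr⟩
  have hnonneg' : ∀ τ ∈ faithfulStates n, 0 ≤ entProd σ Φ τ := fun τ hτ => hnonneg τ hτ.1 hτ.2
  have hconvex' : ConvexOn ℝ (faithfulStates n) (entProd σ Φ) := by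
    refine ⟨convex_faithfulStates n, fun ρ₁ h₁ ρ₂ h₂ a b ha hb hab => ?_⟩
    obtain rfl : b = 1 - a := eq_sub_of_add_eq' hab
    exact hconvex ρ₁ ρ₂ h₁.1 h₁.2 h₂.1 h₂.2 a ha (sub_nonneg.1 hb)
  have hherm : (ρ - σ).IsHermitian := hρ.isHermitian.sub hσ.isHermitian
  have htrace : (ρ - σ).trace = 0 := by rw [Matrix.trace_sub, hρtr, hσtr, sub_self]
  refine (hnonneg ρ hρ hρtr).lt_of_ne' fun hzero => hne ?_
  have hquad : bkmTilde σ (Φ (ρ - σ)) (ρ - σ) = 0 :=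
    bkmTilde_map_sub_eq_zero hσ' hΦσ hnonneg' hconvex' ⟨hρ, hρtr⟩ hzero
  have hker : Φ (ρ - σ) = 0 :=
    map_eq_zero_of_bkmTilde_map_self_eq_zero hσ' hΦherm hΦσ hnonneg' hsa hherm hquad
  exact sub_eq_zero.1 (hΦinj _ hherm htrace hker)
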